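/- arXiv:1303.4454 — 2 statements merged into one kernel-verified Lean document; each statement's English description precedes it below -/
import Mathlib

section
/- Let S ⊆ ℤ² be a finite set of lattice points and let P = convexHull ℝ S ⊆ ℝ² have nonempty interior (a convex lattice polygon). Then for every positive integer ℓ, the number of points of ℤ² lying in the topological interior of the dilated polygon ℓ•P := {ℓ·x : x ∈ P} equals A·ℓ² − (B/2)·ℓ + 1, where A is the Lebesgue measure of P and B is the number of points of ℤ² in the frontier of P. -/
/-!
The polygon lies over an interval `[a, b]` with integer endpoints, between the graphs of its lower
boundary `f` and its upper boundary `g`: its interior is `{a < x < b, f x < y < g x}`. Put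
`G x = l * g (x / l)` and `F x = l * f (x / l)`. Counting column by column, the `l`-th dilate has
`∑ (⌈G x⌉ - ⌊F x⌋ - 1)` interior lattice points, the sum being over `l * a < x < l * b`, and `P`
itself contains `∑ (⌊g x⌋ - ⌈f x⌉ + 1)` lattice points, over `a ≤ x ≤ b`.

These sums are computed from two facts about an interval `[s, t]` with integer endpoints on which
`g` is affine with integer values at `s` and `t`:

* the point reflection of the graph at the midpoint of the chord exchanges floors and ceilings, so
  that `∑ (⌈G x⌉ + ⌊G x⌋)` over `l * s ≤ x < l * t` is `2 * l ^ 2 * ∫ g` up to a boundary term;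
* `⌈G x⌉ - ⌊G x⌋` depends only on the residue of `x - l * s` modulo `t - s`, so its sum over
  `l * s ≤ x < l * t` is `l` times the corresponding sum for `g`.

Both statements are additive in the interval (`SegmentSums.trans`). They hold on all of `[a, b]`
by induction on the length: between two lattice points of the graph, either `g` is affine or its
graph contains a further lattice point strictly in between (`IsUpperHull.affine_or_split`). No
ordering of the vertices and no decomposition into triangles is needed. The lower boundary is
treated by applying the same results to `-f`, and `lattice_count` combines everything.
-/

open MeasureTheory Set Pointwise

/-- The embedding of the lattice `ℤ²` into `ℝ²`. -/
noncomputable def latticeMap : (Fin 2 → ℤ) → (Fin 2 → ℝ) := fun n j => (n j : ℝ)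


/-! ### Sums over integer intervals -/

theorem int_sum_Ico_consecutive {M : Type*} [AddCommMonoid M] (f : ℤ → M) {a b c : ℤ}
    (hab : a ≤ b) (hbc : b ≤ c) :
    ∑ x ∈ Finset.Ico a b, f x + ∑ x ∈ Finset.Ico b c, f x = ∑ x ∈ Finset.Ico a c, f x := by
  rw [← Finset.Ico_union_Ico_eq_Ico hab hbc,
    Finset.sum_union (Finset.Ico_disjoint_Ico_consecutive a b c)]

theorem int_sum_Ico_shift {M : Type*} [AddCommMonoid M] (f : ℤ → M) (a b c : ℤ) :
    ∑ x ∈ Finset.Ico (a + c) (b + c), f x = ∑ x ∈ Finset.Ico a b, f (x + c) :=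
  (Finset.sum_Ico_add' f a b c).symm

theorem sum_Ico_periodic (φ : ℤ → ℤ) (d : ℤ) (hd : 0 < d) (hφ : ∀ k, φ (k + d) = φ k) (l : ℕ) :
    ∑ x ∈ Finset.Ico 0 ((l : ℤ) * d), φ x = l * ∑ x ∈ Finset.Ico 0 d, φ x := by
  induction l with
  | zero => simp
  | succ l ih =>
    have hφl : ∀ k, φ (k + l * d) = φ k := fun k => by
      have := Function.Periodic.nat_mul (f := φ) (c := d) hφ l k
      simpa using this
    rw [← int_sum_Ico_consecutive φ (b := (l : ℤ) * d) (by positivity) (by push_cast; nlinarith), ih]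
    have := int_sum_Ico_shift φ 0 d (l * d)
    simp only [hφl] at this
    have h2 : ((l + 1 : ℕ) : ℤ) * d = d + l * d := by push_cast; ring
    rw [zero_add] at this
    rw [h2, this]; push_cast; ring

/-! ### Upper hulls of finite sets of lattice points -/

/-- `g` is on `[a, b]` the upper boundary of the convex hull of the lattice points `(u p, v p)`,
`p ∈ S`, where `a` and `b` are the extreme abscissae: it is concave, lies above all the points and
below every affine function which lies above all of them. Its values outside `[a, b]` are
irrelevant. -/
structure IsUpperHull {ι : Type*} (S : Finset ι) (u v : ι → ℤ) (a b : ℤ) (g : ℝ → ℝ) : Prop where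
  lt : a < b
  concave : ConcaveOn ℝ (Icc (a : ℝ) b) g
  left_le : ∀ p ∈ S, a ≤ u p
  le_right : ∀ p ∈ S, u p ≤ b
  le : ∀ p ∈ S, (v p : ℝ) ≤ g (u p)
  le_affine : ∀ m c : ℝ, (∀ p ∈ S, (v p : ℝ) ≤ m * u p + c) → ∀ x ∈ Icc (a : ℝ) b, g x ≤ m * x + c
  left_mem : ∃ p ∈ S, u p = a
  right_mem : ∃ p ∈ S, u p = b

variable {ι : Type*} {S : Finset ι} {u v : ι → ℤ} {a b : ℤ} {g : ℝ → ℝ}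

/-- The upper hull is an integer above an extreme abscissa `c`. Here `e = 1` if `c` is the left
end and `e = -1` if it is the right end. -/
theorem IsUpperHull.end_value (h : IsUpperHull S u v a b g) (e c : ℤ) (hc : c ∈ Icc a b)
    (hmem : ∃ p ∈ S, u p = c) (he : ∀ p ∈ S, u p ≠ c → 1 ≤ e * (u p - c)) :
    ∃ y : ℤ, g c = y := by
  classical
  obtain ⟨p0, hp0, hp0c⟩ := hmem
  obtain ⟨q, hq, hmax⟩ := Finset.exists_max_image (S.filter (fun p => u p = c)) v
    ⟨p0, by simp [hp0, hp0c]⟩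
  rw [Finset.mem_filter] at hq
  obtain ⟨r, hr, hrmax⟩ := Finset.exists_max_image S (fun p => |v p - v q|) ⟨p0, hp0⟩
  refine ⟨v q, le_antisymm ?_ (by rw [← hq.2]; exact h.le q hq.1)⟩
  set K := |v r - v q|
  have hK : 0 ≤ K := abs_nonneg _
  -- a line through the topmost point above `c`, steep enough to dominate all the other points
  have := h.le_affine (K * e) (v q - K * e * c) (fun p hp => ?_) c
    ⟨by exact_mod_cast hc.1, by exact_mod_cast hc.2⟩
  · linarith
  · have key : v p ≤ K * e * u p + (v q - K * e * c) := by
      by_cases hpc : u p = c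
      · have := hmax p (by simp [hp, hpc])
        rw [hpc]; linarith
      · have h1 := he p hp hpc
        have h2 := (le_abs_self _).trans (hrmax p hp)
        nlinarith
    exact_mod_cast key

theorem IsUpperHull.left_value (h : IsUpperHull S u v a b g) : ∃ y : ℤ, g a = y :=
  h.end_value 1 a ⟨le_rfl, h.lt.le⟩ h.left_mem fun p hp hne => by
    have := h.left_le p hp; omega

theorem IsUpperHull.right_value (h : IsUpperHull S u v a b g) : ∃ y : ℤ, g b = y :=
  h.end_value (-1) b ⟨h.lt.le, le_rfl⟩ h.right_mem fun p hp hne => by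
    have := h.le_right p hp; omega

/-- Between two lattice points of its graph, the upper hull either is affine or passes through
another lattice point. A point `q` of `S` that is highest above the chord lies on the hull, because
the hull is below the parallel to the chord through `q`. If `q` is not strictly between the two
given points, then concavity puts `q`, hence the whole hull, below the line of the chord. -/
theorem IsUpperHull.affine_or_split (h : IsUpperHull S u v a b g) {s t ys yt : ℤ}
    (has : a ≤ s) (hst : s < t) (htb : t ≤ b) (hs : g s = ys) (ht : g t = yt) :
    (∀ x ∈ Icc (s : ℝ) t, g x = ys + ((yt : ℝ) - ys) / (t - s) * (x - s)) ∨
      ∃ r y : ℤ, s < r ∧ r < t ∧ g r = y := by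
  have hasR : (a : ℝ) ≤ s := by exact_mod_cast has
  have hstR : (s : ℝ) < t := by exact_mod_cast hst
  have htbR : (t : ℝ) ≤ b := by exact_mod_cast htb
  have hd : (0 : ℝ) < t - s := by linarith
  have hsm : (s : ℝ) ∈ Icc (a : ℝ) b := ⟨by linarith, by linarith⟩
  have htm : (t : ℝ) ∈ Icc (a : ℝ) b := ⟨by linarith, by linarith⟩
  set m : ℝ := (yt - ys : ℝ) / (t - s) with hm
  have hmd : m * (t - s) = yt - ys := by rw [hm]; field_simp
  obtain ⟨p0, hp0, -⟩ := h.left_mem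
  obtain ⟨q, hq, hmax⟩ := Finset.exists_max_image S (fun p => (v p : ℝ) - m * u p) ⟨p0, hp0⟩
  have hle := h.le_affine m (v q - m * u q) (fun p hp => by have := hmax p hp; linarith)
  have hqa : (a : ℝ) ≤ u q := by exact_mod_cast h.left_le q hq
  have hqb : (u q : ℝ) ≤ b := by exact_mod_cast h.le_right q hq
  have hqg := h.le q hq
  by_cases hin : s < u q ∧ u q < t
  · right
    refine ⟨u q, v q, hin.1, hin.2, le_antisymm ?_ hqg⟩
    have := hle (u q) ⟨hqa, hqb⟩
    linarith
  left
  have hchord : (v q : ℝ) ≤ ys + m * (u q - s) := by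
    rcases lt_trichotomy (u q) s with hlt | heq | hgt
    · have hltR : (u q : ℝ) < s := by exact_mod_cast hlt
      have := h.concave.slope_anti_adjacent ⟨hqa, hqb⟩ htm hltR hstR
      rw [hs, ht, ← hm, le_div_iff₀ (by linarith)] at this
      linarith
    · rw [heq] at hqg ⊢; rw [hs] at hqg; simpa using hqg
    · have hge : t ≤ u q := by
        by_contra hc; exact hin ⟨hgt, not_le.mp hc⟩
      rcases hge.eq_or_lt with heq | hlt
      · rw [← heq] at hqg ⊢; rw [ht] at hqg; linarith
      · have hltR : (t : ℝ) < u q := by exact_mod_cast hlt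
        have := h.concave.slope_anti_adjacent hsm ⟨hqa, hqb⟩ hstR hltR
        rw [hs, ht, ← hm, div_le_iff₀ (by linarith)] at this
        linarith
  intro x hx
  apply le_antisymm
  · have := hle x ⟨by linarith [hx.1], by linarith [hx.2]⟩
    linarith
  · have := h.concave.2 hsm htm
      (show (0 : ℝ) ≤ (t - x) / (t - s) from div_nonneg (by linarith [hx.2]) hd.le)
      (show (0 : ℝ) ≤ (x - s) / (t - s) from div_nonneg (by linarith [hx.1]) hd.le)
      (by field_simp; ring)
    simp only [smul_eq_mul, hs, ht] at this
    have e1 : (t - x) / ((t : ℝ) - s) * (s : ℝ) + (x - s) / ((t : ℝ) - s) * t = x := by field_simp; ring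
    have e2 : (t - x) / ((t : ℝ) - s) * (ys : ℝ) + (x - s) / ((t : ℝ) - s) * yt = ys + m * (x - s) := by
      rw [hm]; field_simp; ring
    rwa [e1, e2] at this

/-! ### Floor and ceiling sums along a boundary -/

/-- The floor and ceiling sums of the dilate `x ↦ l * g (x / l)` over the integers of
`[l * s, l * t)`: the sum of both is given by the integral of `g`, and their difference, which
counts the `x` with a non-integral value, is `l` times the one for `g` on `[s, t)`. -/
def SegmentSums (g : ℝ → ℝ) (l : ℕ) (s t : ℤ) : Prop :=
  IntervalIntegrable g volume s t ∧
  ((∑ x ∈ Finset.Ico (l * s) (l * t), (⌈l * g (x / l)⌉ + ⌊l * g (x / l)⌋) : ℤ) : ℝ) =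
    2 * l ^ 2 * (∫ x in (s : ℝ)..t, g x) + l * (g s - g t) ∧
  ∑ x ∈ Finset.Ico (l * s) (l * t), (⌈l * g (x / l)⌉ - ⌊l * g (x / l)⌋) =
    l * ∑ x ∈ Finset.Ico s t, (⌈g x⌉ - ⌊g x⌋)

theorem SegmentSums.trans {l : ℕ} {s r t : ℤ} (hsr : s ≤ r) (hrt : r ≤ t)
    (h₁ : SegmentSums g l s r) (h₂ : SegmentSums g l r t) : SegmentSums g l s t := by
  have e1 : (l : ℤ) * s ≤ l * r := by gcongr
  have e2 : (l : ℤ) * r ≤ l * t := by gcongr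
  refine ⟨h₁.1.trans h₂.1, ?_, ?_⟩
  · rw [← int_sum_Ico_consecutive _ e1 e2,
      ← intervalIntegral.integral_add_adjacent_intervals h₁.1 h₂.1]
    rw [Int.cast_add, h₁.2.1, h₂.2.1]
    ring
  · rw [← int_sum_Ico_consecutive _ e1 e2, ← int_sum_Ico_consecutive _ hsr hrt, h₁.2.2, h₂.2.2]
    ring

/-- The sums along a segment with lattice end points, by reflection and by periodicity. -/
theorem segmentSums_affine {l : ℕ} (hl : 0 < l) {s t ys yt : ℤ} (hst : s < t)
    (hg : ∀ x ∈ Icc (s : ℝ) t, g x = ys + (yt - ys : ℝ) / (t - s) * (x - s)) :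
    SegmentSums g l s t := by
  have hstR : (s : ℝ) < t := by exact_mod_cast hst
  have hd : (0 : ℝ) < t - s := by linarith
  have hlR : (0 : ℝ) < l := by exact_mod_cast hl
  set m : ℝ := (yt - ys : ℝ) / (t - s) with hm
  have hmd : m * (t - s) = yt - ys := by rw [hm]; field_simp
  have hs : g s = ys := by rw [hg s ⟨le_rfl, hstR.le⟩]; ring
  have ht : g t = yt := by rw [hg t ⟨hstR.le, le_rfl⟩, hmd]; ring
  have hst' : (l : ℤ) * s ≤ l * t := by gcongr
  have hG : ∀ x ∈ Finset.Icc (l * s) (l * t), l * g ((x : ℤ) / l) = l * ys + m * (x - l * s) := by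
    intro x hx
    rw [Finset.mem_Icc] at hx
    have h1 : (l * s : ℝ) ≤ x := by exact_mod_cast hx.1
    have h2 : (x : ℝ) ≤ l * t := by exact_mod_cast hx.2
    rw [hg _ ⟨by rw [le_div_iff₀ hlR]; linarith, by rw [div_le_iff₀ hlR]; linarith⟩]
    field_simp
  have hii : IntervalIntegrable g volume s t := by
    have : IntervalIntegrable (fun x : ℝ => ys + m * (x - s)) volume s t :=
      Continuous.intervalIntegrable (by fun_prop) _ _
    refine this.congr ?_
    intro x hx
    rw [uIoc_of_le hstR.le] at hx
    exact (hg x ⟨hx.1.le, hx.2⟩).symm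
  have hint : 2 * ∫ x in (s : ℝ)..t, g x = (t - s) * (ys + yt) := by
    have : ∫ x in (s : ℝ)..t, g x = ∫ x in (s : ℝ)..t, (ys - m * s) + m * x := by
      apply intervalIntegral.integral_congr
      intro x hx
      rw [uIcc_of_le hstR.le] at hx
      simp only [hg x hx]; ring
    rw [this, intervalIntegral.integral_add (by simp)
      (Continuous.intervalIntegrable (by fun_prop) _ _),
      intervalIntegral.integral_const_mul, integral_id, intervalIntegral.integral_const]
    simp only [smul_eq_mul]
    linear_combination (t - s : ℝ) * hmd
  refine ⟨hii, ?_, ?_⟩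
  · -- the reflection `x ↦ l * s + l * t - x` exchanges floors and ceilings
    have hrefl : ∑ x ∈ Finset.Ico (l * s) (l * t), ⌈l * g ((x : ℤ) / l)⌉ =
        ∑ x ∈ Finset.Ioc (l * s) (l * t), ((l * (ys + yt) : ℤ) - ⌊l * g ((x : ℤ) / l)⌋) := by
      refine Finset.sum_bij' (fun x _ => l * s + l * t - x) (fun x _ => l * s + l * t - x)
        ?_ ?_ ?_ ?_ ?_
      · intro x hx; simp only [Finset.mem_Ico, Finset.mem_Ioc] at *; omega
      · intro x hx; simp only [Finset.mem_Ico, Finset.mem_Ioc] at *; omega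
      · intro x hx; ring
      · intro x hx; ring
      · intro x hx
        simp only [Finset.mem_Ico] at hx
        rw [hG x (by simp; omega), hG _ (by simp; omega)]
        have : (l * ys + m * ((l * s + l * t - x : ℤ) - l * s) : ℝ) =
            (l * (ys + yt) : ℤ) - (l * ys + m * (x - l * s)) := by
          push_cast
          linear_combination (l : ℝ) * hmd
        rw [this, sub_eq_add_neg (((l * (ys + yt) : ℤ)) : ℝ), Int.floor_intCast_add, Int.floor_neg]
        ring
    have hIoc : ∑ x ∈ Finset.Ioc (l * s) (l * t), ⌊l * g ((x : ℤ) / l)⌋ + l * ys =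
        ∑ x ∈ Finset.Ico (l * s) (l * t), ⌊l * g ((x : ℤ) / l)⌋ + l * yt := by
      have e1 : ⌊l * g (((l * s : ℤ) : ℝ) / l)⌋ = l * ys := by
        rw [hG _ (by simp [hst'])]; push_cast
        rw [sub_self, mul_zero, add_zero]; exact_mod_cast Int.floor_intCast (l * ys)
      have e2 : ⌊l * g (((l * t : ℤ) : ℝ) / l)⌋ = l * yt := by
        rw [hG _ (by simp [hst'])]; push_cast
        rw [show (l * ys + m * (l * t - l * s) : ℝ) = ((l * yt : ℤ) : ℝ) by
          push_cast; linear_combination (l : ℝ) * hmd]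
        exact Int.floor_intCast _
      rw [← e1, ← e2, Finset.sum_Ioc_add_eq_sum_Icc hst', Finset.sum_Ico_add_eq_sum_Icc hst']
    have hcard : ((Finset.Ioc ((l : ℤ) * s) (l * t)).card : ℤ) = l * t - l * s := by
      rw [Int.card_Ioc]; omega
    rw [Finset.sum_sub_distrib, Finset.sum_const, nsmul_eq_mul, hcard] at hrefl
    have htot : ∑ x ∈ Finset.Ico (l * s) (l * t), (⌈l * g ((x : ℤ) / l)⌉ + ⌊l * g ((x : ℤ) / l)⌋)
        = (l * t - l * s) * (l * (ys + yt)) + l * (ys - yt) := by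
      rw [Finset.sum_add_distrib]; linarith
    rw [htot, hs, ht]
    push_cast
    linear_combination -(l : ℝ) ^ 2 * hint
  · -- the fractional behaviour depends only on `x - l * s` modulo `t - s`
    set φ : ℤ → ℤ := fun k => ⌈m * k⌉ - ⌊m * k⌋ with hφ
    have hper : ∀ k, φ (k + (t - s)) = φ k := by
      intro k
      have : m * ((k + (t - s) : ℤ) : ℝ) = m * k + (yt - ys : ℤ) := by
        push_cast; linear_combination hmd
      simp only [hφ, this, Int.ceil_add_intCast, Int.floor_add_intCast]; ring
    have h1 := sum_Ico_periodic φ (t - s) (by omega) hper l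
    have h2 := int_sum_Ico_shift (fun x => ⌈l * g ((x : ℤ) / l)⌉ - ⌊l * g ((x : ℤ) / l)⌋) 0
      (l * (t - s)) (l * s)
    have h3 := int_sum_Ico_shift (fun x => ⌈g (x : ℤ)⌉ - ⌊g (x : ℤ)⌋) 0 (t - s) s
    rw [zero_add, show (l : ℤ) * (t - s) + l * s = l * t by ring] at h2
    rw [zero_add, sub_add_cancel] at h3
    rw [h2, h3]
    calc _ = ∑ x ∈ Finset.Ico 0 (l * (t - s)), φ x := by
          apply Finset.sum_congr rfl
          intro x hx
          rw [Finset.mem_Ico] at hx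
          rw [hG _ (by rw [Finset.mem_Icc]; constructor <;> linarith)]
          have : (l * ys + m * ((x + l * s : ℤ) - l * s) : ℝ) = (l * ys : ℤ) + m * x := by
            push_cast; ring
          simp only [this, Int.ceil_intCast_add, Int.floor_intCast_add, hφ]; ring
      _ = _ := by
          rw [h1]; congr 1
          apply Finset.sum_congr rfl
          intro x hx
          rw [Finset.mem_Ico] at hx
          have hx1 : (0 : ℝ) ≤ x := by exact_mod_cast hx.1
          have hx2 : (x : ℝ) ≤ t - s := by exact_mod_cast hx.2.le
          rw [hg _ (by push_cast; constructor <;> linarith)]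
          have : (ys + m * ((x + s : ℤ) - s) : ℝ) = ys + m * x := by
            push_cast; ring
          simp only [this, Int.ceil_intCast_add, Int.floor_intCast_add, hφ]; ring

/-- The sums along any part of the hull between two of its lattice points; `n` bounds the width,
on which the proof is by induction. -/
theorem IsUpperHull.segmentSums (h : IsUpperHull S u v a b g) {l : ℕ} (hl : 0 < l) (n : ℕ) :
    ∀ s t ys yt : ℤ, (t - s).toNat ≤ n → a ≤ s → s < t → t ≤ b → g s = ys → g t = yt →
      SegmentSums g l s t := by
  induction n with
  | zero => intro s t _ _ hn _ hst; omega
  | succ n ih =>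
    intro s t ys yt hn has hst htb hs ht
    rcases h.affine_or_split has hst htb hs ht with haff | ⟨r, y, hsr, hrt, hr⟩
    · exact segmentSums_affine hl hst haff
    · exact (ih s r ys y (by omega) has hsr (by omega) hs hr).trans hsr.le hrt.le
        (ih r t y yt (by omega) (by omega) hrt htb hr ht)

/-! ### A convex set as the region between two graphs -/

/-- A criterion for upper hulls in terms of the membership predicate `M x y` of a convex set. The
hypothesis `hhalf` says that the set lies in every half-plane containing the points of `S`. A
predicate is used so that the criterion also applies to the reflected polygon. -/
theorem isUpperHull_of_convex (hab : a < b) (M : ℝ → ℝ → Prop)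
    (hconv : ∀ x y x' y' α β : ℝ, M x y → M x' y' → 0 ≤ α → 0 ≤ β → α + β = 1 →
      M (α * x + β * x') (α * y + β * y'))
    (hS : ∀ p ∈ S, M (u p) (v p))
    (hhalf : ∀ m k c : ℝ, (∀ p ∈ S, m * u p + k * v p ≤ c) → ∀ x y, M x y → m * x + k * y ≤ c)
    (ha : ∀ p ∈ S, a ≤ u p) (hb : ∀ p ∈ S, u p ≤ b)
    (hamem : ∃ p ∈ S, u p = a) (hbmem : ∃ p ∈ S, u p = b)
    (hg : ∀ x ∈ Icc (a : ℝ) b, M x (g x)) (hle : ∀ x y, M x y → y ≤ g x) :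
    IsUpperHull S u v a b g where
  lt := hab
  concave := ⟨convex_Icc _ _, fun x hx y hy α β hα hβ h1 =>
    hle _ _ (hconv _ _ _ _ α β (hg x hx) (hg y hy) hα hβ h1)⟩
  left_le := ha
  le_right := hb
  le p hp := hle _ _ (hS p hp)
  le_affine m c h x hx := by
    have := hhalf (-m) 1 c (fun p hp => by have := h p hp; linarith) x (g x) (hg x hx)
    linarith
  left_mem := hamem
  right_mem := hbmem

theorem column_eq_Icc {P : Set (Fin 2 → ℝ)} (hconv : Convex ℝ P) (hcomp : IsCompact P) {x : ℝ}
    (hx : ∃ y, ![x, y] ∈ P) :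
    {y | ![x, y] ∈ P} = Icc (sInf {y | ![x, y] ∈ P}) (sSup {y | ![x, y] ∈ P}) := by
  apply eq_Icc_of_connected_compact
  · refine ⟨hx, Convex.isPreconnected ?_⟩
    intro y hy z hz α β hα hβ h1
    have := hconv hy hz hα hβ h1
    simp only [mem_ofPred_eq] at *
    convert this using 1
    ext i
    fin_cases i
    · simp [← add_mul, h1]
    · simp
  · have hc : IsCompact ((fun p : Fin 2 → ℝ => p 1) '' (P ∩ {p | p 0 = x})) :=
      (hcomp.inter_right (isClosed_eq (by fun_prop) (by fun_prop))).image (by fun_prop)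
    convert hc using 1
    ext y
    simp only [mem_ofPred_eq, mem_image, mem_inter_iff]
    constructor
    · intro h; exact ⟨_, ⟨h, by simp⟩, by simp⟩
    · rintro ⟨p, ⟨hp, hp0⟩, rfl⟩
      convert hp using 1
      ext i; fin_cases i <;> simp [hp0]

/-- Lattice points counted column by column. A column with `lo x = hi x + 1` is empty; smaller
values of `hi x` are excluded, as they would contribute negative numbers. -/
theorem ncard_between (X : Finset ℤ) (lo hi : ℤ → ℤ) (h : ∀ x ∈ X, lo x ≤ hi x + 1) :
    {n : Fin 2 → ℤ | n 0 ∈ X ∧ n 1 ∈ Icc (lo (n 0)) (hi (n 0))}.Finite ∧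
    ({n : Fin 2 → ℤ | n 0 ∈ X ∧ n 1 ∈ Icc (lo (n 0)) (hi (n 0))}.ncard : ℤ) =
      ∑ x ∈ X, (hi x - lo x + 1) := by
  classical
  set F : Finset (Fin 2 → ℤ) := (X.sigma fun x => Finset.Icc (lo x) (hi x)).map
    ⟨fun p => ![p.1, p.2], by
      rintro ⟨x, y⟩ ⟨x', y'⟩ h
      have h0 := congrFun h 0
      have h1 := congrFun h 1
      simp at h0 h1
      subst h0; subst h1; rfl⟩ with hF
  have : {n : Fin 2 → ℤ | n 0 ∈ X ∧ n 1 ∈ Icc (lo (n 0)) (hi (n 0))} = F := by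
    ext n
    simp only [hF, mem_ofPred_eq, Finset.coe_map, mem_image, Finset.mem_coe, Finset.mem_sigma,
      Finset.mem_Icc]
    constructor
    · rintro ⟨h0, h1⟩
      refine ⟨⟨n 0, n 1⟩, ⟨h0, h1⟩, ?_⟩
      ext i; fin_cases i <;> rfl
    · rintro ⟨⟨x, y⟩, ⟨h0, h1⟩, rfl⟩
      exact ⟨h0, h1⟩
  rw [this]
  refine ⟨F.finite_toSet, ?_⟩
  rw [ncard_coe_finset, hF, Finset.card_map, Finset.card_sigma]
  push_cast
  apply Finset.sum_congr rfl
  intro x hx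
  have := h x hx
  rw [Int.card_Icc]; omega

theorem profile_of_mem_interior {P : Set (Fin 2 → ℝ)} {A B : ℝ} {f g : ℝ → ℝ}
    (hmem : ∀ p, p ∈ P ↔ p 0 ∈ Icc A B ∧ p 1 ∈ Icc (f (p 0)) (g (p 0)))
    {p : Fin 2 → ℝ} (hp : p ∈ interior P) :
    p 0 ∈ Ioo A B ∧ p 1 ∈ Ioo (f (p 0)) (g (p 0)) := by
  obtain ⟨ε, hε, hball⟩ := Metric.mem_nhds_iff.mp (mem_interior_iff_mem_nhds.mp hp)
  have key : ∀ s t : ℝ, |s| < ε → |t| < ε → ![p 0 + s, p 1 + t] ∈ P := by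
    intro s t hs ht
    apply hball
    rw [Metric.mem_ball, dist_pi_lt_iff hε]
    intro i
    fin_cases i <;> simpa [Real.dist_eq]
  have hε2 : |ε / 2| < ε := by rw [abs_of_pos (by positivity)]; linarith
  have hε2' : |-(ε / 2)| < ε := by rwa [abs_neg]
  have h0 : |(0 : ℝ)| < ε := by simpa
  have a1 := (hmem _).mp (key (ε / 2) 0 hε2 h0)
  have a2 := (hmem _).mp (key (-(ε / 2)) 0 hε2' h0)
  have a3 := (hmem _).mp (key 0 (ε / 2) h0 hε2)
  have a4 := (hmem _).mp (key 0 (-(ε / 2)) h0 hε2')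
  simp only [Matrix.cons_val_zero, Matrix.cons_val_one, mem_Icc, add_zero] at a1 a2 a3 a4
  exact ⟨⟨by linarith [a2.1.1], by linarith [a1.1.2]⟩,
    ⟨by linarith [a4.2.1], by linarith [a3.2.2]⟩⟩

theorem interior_iff {P : Set (Fin 2 → ℝ)} {A B : ℝ} {f g : ℝ → ℝ}
    (hmem : ∀ p, p ∈ P ↔ p 0 ∈ Icc A B ∧ p 1 ∈ Icc (f (p 0)) (g (p 0)))
    (hf : ContinuousOn f (Ioo A B)) (hg : ContinuousOn g (Ioo A B)) (p : Fin 2 → ℝ) :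
    p ∈ interior P ↔ p 0 ∈ Ioo A B ∧ p 1 ∈ Ioo (f (p 0)) (g (p 0)) := by
  refine ⟨profile_of_mem_interior hmem, ?_⟩
  rintro ⟨h0, h1⟩
  rw [mem_interior_iff_mem_nhds]
  have c0 : ContinuousAt (fun q : Fin 2 → ℝ => q 0) p := (continuous_apply 0).continuousAt
  have c1 : ContinuousAt (fun q : Fin 2 → ℝ => q 1) p := (continuous_apply 1).continuousAt
  have cf : ContinuousAt (fun q : Fin 2 → ℝ => f (q 0)) p :=
    ContinuousAt.comp (f := fun q : Fin 2 → ℝ => q 0)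
      (hf.continuousAt (isOpen_Ioo.mem_nhds h0)) c0
  have cg : ContinuousAt (fun q : Fin 2 → ℝ => g (q 0)) p :=
    ContinuousAt.comp (f := fun q : Fin 2 → ℝ => q 0)
      (hg.continuousAt (isOpen_Ioo.mem_nhds h0)) c0
  filter_upwards [c0.eventually (isOpen_Ioo.mem_nhds h0), cf.eventually_lt c1 h1.1,
    c1.eventually_lt cg h1.2] with q hq0 hqf hqg
  exact (hmem q).mpr ⟨Ioo_subset_Icc_self hq0, hqf.le, hqg.le⟩

/-- A nonnegative concave function with one positive value is positive in the interior. -/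
theorem pos_of_concaveOn {D : ℝ → ℝ} {A B z : ℝ} (hD : ConcaveOn ℝ (Icc A B) D)
    (h0 : ∀ x ∈ Icc A B, 0 ≤ D x) (hz : z ∈ Icc A B) (hDz : 0 < D z) {x : ℝ}
    (hx : x ∈ Ioo A B) : 0 < D x := by
  have key : ∀ e ∈ Icc A B, ∀ α β : ℝ, 0 < α → 0 ≤ β → α + β = 1 → α * z + β * e = x →
      0 < D x := by
    rintro e he α β hα hβ h1 rfl
    have := hD.2 hz he hα.le hβ h1
    simp only [smul_eq_mul] at this
    have h2 := mul_pos hα hDz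
    have h3 := mul_nonneg hβ (h0 e he)
    linarith
  rcases le_total x z with hxz | hxz
  · have hd : 0 < z - A := by linarith [hx.1]
    refine key A ⟨le_rfl, by linarith [hx.1, hx.2]⟩ ((x - A) / (z - A)) ((z - x) / (z - A))
      (div_pos (by linarith [hx.1]) hd) (div_nonneg (by linarith) hd.le) ?_ ?_ <;>
    · field_simp; ring
  · have hd : 0 < B - z := by linarith [hx.2]
    refine key B ⟨by linarith [hx.1, hx.2], le_rfl⟩ ((B - x) / (B - z)) ((x - z) / (B - z))
      (div_pos (by linarith [hx.2]) hd) (div_nonneg (by linarith) hd.le) ?_ ?_ <;>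
    · field_simp; ring

/-- The area between the graphs; the frontier of a convex set is a null set, so it suffices to
measure the interior. -/
theorem volume_eq_integral {P : Set (Fin 2 → ℝ)} (hconv : Convex ℝ P) {A B : ℝ} {f g : ℝ → ℝ}
    (hAB : A ≤ B)
    (hint : ∀ p, p ∈ interior P ↔ p 0 ∈ Ioo A B ∧ p 1 ∈ Ioo (f (p 0)) (g (p 0)))
    (hf : IntervalIntegrable f volume A B) (hg : IntervalIntegrable g volume A B)
    (hfg : ∀ x ∈ Ioo A B, f x ≤ g x) :
    (volume P).toReal = (∫ x in A..B, g x) - ∫ x in A..B, f x := by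
  have h1 : volume P = volume (interior P) :=
    (measure_congr (interior_ae_eq_of_null_frontier (hconv.addHaar_frontier volume))).symm
  have h2 : interior P = MeasurableEquiv.finTwoArrow (α := ℝ) ⁻¹' regionBetween f g (Ioo A B) := by
    ext p
    rw [hint]
    rfl
  rw [h1, h2, (volume_preserving_finTwoArrow ℝ).measure_preimage_equiv,
    Measure.volume_eq_prod,
    volume_regionBetween_eq_integral
      ((intervalIntegrable_iff_integrableOn_Ioo_of_le hAB).mp hf)
      ((intervalIntegrable_iff_integrableOn_Ioo_of_le hAB).mp hg) measurableSet_Ioo hfg,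
    ENNReal.toReal_ofReal (setIntegral_nonneg measurableSet_Ioo fun x hx => by
      simpa using hfg x hx), ← integral_Ioc_eq_integral_Ioo,
    ← intervalIntegral.integral_of_le hAB, ← intervalIntegral.integral_sub hg hf]
  rfl

/-! ### Counting lattice points -/

/-- The reciprocity formula for a closed convex set presented as the region between two graphs,
the upper hull `g` and the lower hull `f` of finite sets of lattice points. -/
theorem lattice_count {P : Set (Fin 2 → ℝ)} (hconv : Convex ℝ P) (hcl : IsClosed P)
    {κ : Type*} {S' : Finset κ} {u' v' : κ → ℤ} {f : ℝ → ℝ}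
    (hg : IsUpperHull S u v a b g) (hf : IsUpperHull S' u' v' a b (fun x => -f x))
    (hmem : ∀ p, p ∈ P ↔ p 0 ∈ Icc (a : ℝ) b ∧ p 1 ∈ Icc (f (p 0)) (g (p 0)))
    (hle : ∀ x ∈ Icc (a : ℝ) b, f x ≤ g x) (hlt : ∀ x ∈ Ioo (a : ℝ) b, f x < g x)
    {l : ℕ} (hl : 0 < l) :
    ({n : Fin 2 → ℤ | latticeMap n ∈ interior ((l : ℝ) • P)}.ncard : ℝ) =
      (volume P).toReal * l ^ 2 -
        (({n : Fin 2 → ℤ | latticeMap n ∈ frontier P}.ncard : ℝ) / 2) * l + 1 := by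
  have hlR : (0 : ℝ) < l := by exact_mod_cast hl
  have hab := hg.lt
  have habR : (a : ℝ) < b := by exact_mod_cast hab
  have hgc : ContinuousOn g (Ioo (a : ℝ) b) :=
    (hg.concave.subset Ioo_subset_Icc_self (convex_Ioo _ _)).continuousOn isOpen_Ioo
  have hfc : ContinuousOn f (Ioo (a : ℝ) b) := by
    have := ((hf.concave.subset Ioo_subset_Icc_self (convex_Ioo _ _)).continuousOn isOpen_Ioo).neg
    exact this.congr fun x _ => by simp
  have hint := interior_iff hmem hfc hgc
  obtain ⟨ga, hga⟩ := hg.left_value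
  obtain ⟨gb, hgb⟩ := hg.right_value
  obtain ⟨fa', hfa'⟩ := hf.left_value
  obtain ⟨fb', hfb'⟩ := hf.right_value
  obtain ⟨gi, gsum, gper⟩ := hg.segmentSums hl _ a b ga gb le_rfl le_rfl hab le_rfl hga hgb
  obtain ⟨fi, fsum, fper⟩ := hf.segmentSums hl _ a b fa' fb' le_rfl le_rfl hab le_rfl hfa' hfb'
  have hfa : f a = (-fa' : ℤ) := by push_cast; linarith
  have hfb : f b = (-fb' : ℤ) := by push_cast; linarith
  have hfi : IntervalIntegrable f volume a b := by
    have := fi.neg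
    rwa [show (-fun x => -f x) = f by ext x; simp] at this
  have hvol := volume_eq_integral hconv habR.le hint hfi gi
    (fun x hx => (hlt x hx).le)
  -- lattice points in the interior of the dilate
  have hI : ∀ k : ℕ, 0 < k →
      {n : Fin 2 → ℤ | latticeMap n ∈ interior ((k : ℝ) • P)}.Finite ∧
      ({n : Fin 2 → ℤ | latticeMap n ∈ interior ((k : ℝ) • P)}.ncard : ℤ) =
        ∑ x ∈ Finset.Ioo (k * a) (k * b), (⌈k * g ((x : ℤ) / k)⌉ - ⌊k * f (x / k)⌋ - 1) := by
    intro k hk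
    have hkR : (0 : ℝ) < k := by exact_mod_cast hk
    have hdiv : ∀ x : ℤ, x ∈ Finset.Ioo (k * a) (k * b) ↔ (x / k : ℝ) ∈ Ioo (a : ℝ) b := by
      intro x
      rw [Finset.mem_Ioo, mem_Ioo, lt_div_iff₀ hkR, div_lt_iff₀ hkR, mul_comm (k : ℤ),
        mul_comm (k : ℤ)]
      norm_cast
    have hset : {n : Fin 2 → ℤ | latticeMap n ∈ interior ((k : ℝ) • P)} =
        {n : Fin 2 → ℤ | n 0 ∈ Finset.Ioo (k * a) (k * b) ∧
          n 1 ∈ Icc (⌊k * f ((n 0 : ℤ) / k)⌋ + 1) (⌈k * g ((n 0 : ℤ) / k)⌉ - 1)} := by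
      ext n
      rw [mem_ofPred_eq, interior_smul₀ hkR.ne', mem_smul_set_iff_inv_smul_mem₀ hkR.ne', hint,
        mem_ofPred_eq, hdiv]
      simp only [latticeMap, Pi.smul_apply, smul_eq_mul, inv_mul_eq_div]
      refine and_congr_right fun _ => ?_
      rw [mem_Ioo, mem_Icc, lt_div_iff₀ hkR, div_lt_iff₀ hkR, Int.add_one_le_iff, Int.floor_lt,
        Int.le_sub_one_iff, Int.lt_ceil, mul_comm (k : ℝ), mul_comm (k : ℝ)]
    have := ncard_between (Finset.Ioo (k * a) (k * b)) (fun x => ⌊k * f ((x : ℤ) / k)⌋ + 1)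
      (fun x => ⌈k * g ((x : ℤ) / k)⌉ - 1) (fun x hx => by
        have h1 : (k : ℝ) * f (x / k) < k * g (x / k) := by
          have := hlt _ ((hdiv x).mp hx); gcongr
        have : ⌊k * f ((x : ℤ) / k)⌋ < ⌈k * g ((x : ℤ) / k)⌉ := by
          rw [Int.floor_lt]; exact h1.trans_le (Int.le_ceil _)
        omega)
    rw [hset]
    refine ⟨this.1, this.2.trans (Finset.sum_congr rfl fun x _ => by ring)⟩
  -- lattice points in `P`
  have hN : {n : Fin 2 → ℤ | latticeMap n ∈ P}.Finite ∧
      ({n : Fin 2 → ℤ | latticeMap n ∈ P}.ncard : ℤ) =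
        ∑ x ∈ Finset.Icc a b, (⌊g (x : ℤ)⌋ - ⌈f x⌉ + 1) := by
    have hset : {n : Fin 2 → ℤ | latticeMap n ∈ P} =
        {n : Fin 2 → ℤ | n 0 ∈ Finset.Icc a b ∧ n 1 ∈ Icc ⌈f (n 0 : ℤ)⌉ ⌊g (n 0 : ℤ)⌋} := by
      ext n
      rw [mem_ofPred_eq, hmem, mem_ofPred_eq]
      simp only [latticeMap, mem_Icc, Finset.mem_Icc, Int.ceil_le, Int.le_floor, Int.cast_le]
    rw [hset]
    exact ncard_between (Finset.Icc a b) (fun x => ⌈f (x : ℤ)⌉) (fun x => ⌊g (x : ℤ)⌋)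
      (fun x hx => by
        rw [Finset.mem_Icc] at hx
        have h1 := hle x ⟨by exact_mod_cast hx.1, by exact_mod_cast hx.2⟩
        rw [Int.ceil_le]; push_cast
        exact h1.trans (Int.lt_floor_add_one _).le)
  have hI1 := hI 1 one_pos
  simp only [Nat.cast_one, one_smul, one_mul, div_one] at hI1
  have hB : ({n : Fin 2 → ℤ | latticeMap n ∈ frontier P}.ncard : ℤ) =
      ∑ x ∈ Finset.Icc a b, (⌊g (x : ℤ)⌋ - ⌈f x⌉ + 1) -
        ∑ x ∈ Finset.Ioo a b, (⌈g (x : ℤ)⌉ - ⌊f x⌋ - 1) := by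
    rw [← hI1.2, ← hN.2]
    have hfr : {n : Fin 2 → ℤ | latticeMap n ∈ frontier P} =
        {n | latticeMap n ∈ P} \ {n | latticeMap n ∈ interior P} := by
      rw [hcl.frontier_eq]; rfl
    rw [hfr]
    have := ncard_sdiff_add_ncard_of_subset (s := {n | latticeMap n ∈ interior P})
      (t := {n | latticeMap n ∈ P}) (fun n hn => interior_subset (s := P) hn) hN.1
    omega
  have hIl := (hI l hl).2
  -- all sums are brought to half-open intervals
  have hlab : (l : ℤ) * a < l * b := by gcongr
  rw [← Finset.sum_Ico_add_eq_sum_Icc hab.le] at hB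
  have hIoo : ∀ (φ : ℤ → ℤ) {s t : ℤ}, s < t →
      ∑ x ∈ Finset.Ioo s t, φ x = ∑ x ∈ Finset.Ico s t, φ x - φ s := by
    intro φ s t hst
    rw [← Finset.Ioo_insert_left hst, Finset.sum_insert (by simp)]; ring
  rw [hIoo _ hab] at hB
  rw [hIoo _ hlab] at hIl
  have ea : ((l * a : ℤ) / l : ℝ) = a := by push_cast; field_simp
  have c1 : ⌈l * g ((l * a : ℤ) / l)⌉ = l * ga := by
    rw [ea, hga]; exact_mod_cast Int.ceil_intCast (l * ga)
  have c2 : ⌊l * f ((l * a : ℤ) / l)⌋ = l * -fa' := by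
    rw [ea, hfa]; exact_mod_cast Int.floor_intCast (l * -fa')
  rw [c1, c2] at hIl
  simp only [hga, hgb, hfa, hfb, Int.ceil_intCast, Int.floor_intCast] at hB
  simp only [mul_neg, Int.ceil_neg, Int.floor_neg, hfa', hfb', intervalIntegral.integral_neg] at fsum fper
  rw [hga, hgb] at gsum
  simp only [Finset.sum_add_distrib, Finset.sum_sub_distrib, Finset.sum_neg_distrib,
    Finset.sum_const, Int.card_Ico, nsmul_eq_mul, mul_one] at hB hIl gsum fsum gper fper
  have n1 : ((b - a).toNat : ℤ) = b - a := by omega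
  have n2 : ((l * b - l * a : ℤ).toNat : ℤ) = l * b - l * a := by omega
  rw [n1] at hB
  rw [n2] at hIl
  have hB' := congrArg (Int.cast : ℤ → ℝ) hB
  have hIl' := congrArg (Int.cast : ℤ → ℝ) hIl
  have gper' := congrArg (Int.cast : ℤ → ℝ) gper
  have fper' := congrArg (Int.cast : ℤ → ℝ) fper
  push_cast at hB' hIl' gper' fper' gsum fsum
  rw [hIl', hB', hvol]
  linear_combination (1 / 2 : ℝ) * (gsum + gper' + fsum + fper')

/-- **Ehrhart reciprocity for lattice polygons**: for a convex lattice polygon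
`P = convexHull ℝ S` with nonempty interior and any positive integer `ℓ`, the number of
lattice points in the interior of the dilated polygon `ℓ•P` equals `A·ℓ² − (B/2)·ℓ + 1`,
where `A` is the area of `P` and `B` the number of lattice points in the frontier of `P`. -/
theorem ehrhart_reciprocity_polygon (S : Finset (Fin 2 → ℤ)) (P : Set (Fin 2 → ℝ))
    (hP : P = convexHull ℝ (latticeMap '' (S : Set (Fin 2 → ℤ))))
    (hne : (interior P).Nonempty)
    (A : ℝ) (hA : A = (volume P).toReal)
    (B : ℕ)
    (hB : B = {n : Fin 2 → ℤ | latticeMap n ∈ frontier P}.ncard) :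
    ∀ ℓ : ℕ, 0 < ℓ →
      ({n : Fin 2 → ℤ | latticeMap n ∈ interior ((ℓ : ℝ) • P)}.ncard : ℝ)
        = A * (ℓ : ℝ) ^ 2 - ((B : ℝ) / 2) * (ℓ : ℝ) + 1 := by
  intro ℓ hℓ
  have hconv : Convex ℝ P := hP ▸ convex_convexHull ℝ _
  have hcomp : IsCompact P := hP ▸ (S.finite_toSet.image latticeMap).isCompact_convexHull ℝ
  have hsub : ∀ p ∈ S, latticeMap p ∈ P := fun p hp =>
    hP ▸ subset_convexHull ℝ _ (mem_image_of_mem _ hp)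
  have hhalf : ∀ m k c : ℝ, (∀ p ∈ S, m * p 0 + k * p 1 ≤ c) →
      ∀ q ∈ P, m * q 0 + k * q 1 ≤ c := by
    intro m k c h q hq
    have : P ⊆ {q : Fin 2 → ℝ | m * q 0 + k * q 1 ≤ c} := by
      rw [hP]
      refine convexHull_min ?_ (convex_halfSpace_le ?_ c)
      · rintro _ ⟨p, hp, rfl⟩
        simpa [latticeMap] using h p hp
      · constructor
        · intro x y; simp only [Pi.add_apply]; ring
        · intro r x; simp only [Pi.smul_apply, smul_eq_mul]; ring
    exact this hq
  have hS : S.Nonempty := by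
    by_contra hS
    rw [Finset.not_nonempty_iff_eq_empty] at hS
    subst hS
    simp [hP] at hne
  obtain ⟨pa, hpa, hamin⟩ := S.exists_min_image (fun p => p 0) hS
  obtain ⟨pb, hpb, hbmax⟩ := S.exists_max_image (fun p => p 0) hS
  set a := pa 0 with ha
  set b := pb 0 with hb
  have hPa : ∀ q ∈ P, (a : ℝ) ≤ q 0 := fun q hq => by
    have := hhalf (-1) 0 (-a) (fun p hp => by
      have : (a : ℝ) ≤ p 0 := by exact_mod_cast hamin p hp
      linarith) q hq
    linarith
  have hPb : ∀ q ∈ P, q 0 ≤ (b : ℝ) := fun q hq => by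
    have := hhalf 1 0 b (fun p hp => by
      have : (p 0 : ℝ) ≤ b := by exact_mod_cast hbmax p hp
      linarith) q hq
    linarith
  have heta : ∀ q : Fin 2 → ℝ, ![q 0, q 1] = q := fun q => by
    ext i; fin_cases i <;> rfl
  have habR : (a : ℝ) ≤ b := by exact_mod_cast hamin pb hpb
  have hnonempty : ∀ x ∈ Icc (a : ℝ) b, ∃ y, ![x, y] ∈ P := by
    intro x hx
    have hseg : x ∈ segment ℝ (a : ℝ) b := by rwa [segment_eq_Icc habR]
    obtain ⟨α, β, hα, hβ, h1, rfl⟩ := hseg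
    refine ⟨α * pa 1 + β * pb 1, ?_⟩
    have := hconv (hsub pa hpa) (hsub pb hpb) hα hβ h1
    rw [← heta (_ + _)] at this
    simpa [latticeMap] using this
  set f : ℝ → ℝ := fun x => sInf {y | ![x, y] ∈ P} with hf
  set g : ℝ → ℝ := fun x => sSup {y | ![x, y] ∈ P} with hg
  have hcol : ∀ x y, ![x, y] ∈ P ↔ x ∈ Icc (a : ℝ) b ∧ y ∈ Icc (f x) (g x) := by
    intro x y
    constructor
    · intro h
      have hc := column_eq_Icc hconv hcomp ⟨y, h⟩
      exact ⟨⟨by simpa using hPa _ h, by simpa using hPb _ h⟩, by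
        rw [← hc]; exact h⟩
    · rintro ⟨hx, hy⟩
      have hc := column_eq_Icc hconv hcomp (hnonempty x hx)
      rw [hf, hg, ← hc] at hy
      exact hy
  have hmem : ∀ p, p ∈ P ↔ p 0 ∈ Icc (a : ℝ) b ∧ p 1 ∈ Icc (f (p 0)) (g (p 0)) := by
    intro p; rw [← hcol, heta]
  obtain ⟨z, hz⟩ := hne
  obtain ⟨hz0, hz1⟩ := profile_of_mem_interior hmem hz
  have hab : a < b := by exact_mod_cast hz0.1.trans hz0.2
  have hle : ∀ x ∈ Icc (a : ℝ) b, f x ≤ g x := by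
    intro x hx
    obtain ⟨y, hy⟩ := hnonempty x hx
    have := ((hcol x y).mp hy).2
    exact this.1.trans this.2
  have hconv2 : ∀ x y x' y' α β : ℝ, ![x, y] ∈ P → ![x', y'] ∈ P → 0 ≤ α → 0 ≤ β → α + β = 1 →
      ![α * x + β * x', α * y + β * y'] ∈ P := by
    intro x y x' y' α β h h' hα hβ h1
    have := hconv h h' hα hβ h1
    rw [← heta (_ + _)] at this
    simpa using this
  have hgH : IsUpperHull S (fun p => p 0) (fun p => p 1) a b g :=
    isUpperHull_of_convex hab (fun x y => ![x, y] ∈ P) hconv2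
      (fun p hp => by
        have := hsub p hp
        rwa [← heta (latticeMap p)] at this)
      (fun m k c h x y hxy => by simpa using hhalf m k c h _ hxy)
      hamin hbmax ⟨pa, hpa, rfl⟩ ⟨pb, hpb, rfl⟩
      (fun x hx => (hcol _ _).mpr ⟨hx, hle x hx, le_rfl⟩)
      (fun x y h => ((hcol x y).mp h).2.2)
  have hfH : IsUpperHull S (fun p => p 0) (fun p => -p 1) a b (fun x => -f x) :=
    isUpperHull_of_convex hab (fun x y => ![x, -y] ∈ P)
      (fun x y x' y' α β h h' hα hβ h1 => by
        have := hconv2 _ _ _ _ α β h h' hα hβ h1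
        rwa [show α * -y + β * -y' = -(α * y + β * y') by ring] at this)
      (fun p hp => by
        have := hsub p hp
        rw [← heta (latticeMap p)] at this
        show ![(p 0 : ℝ), -((-p 1 : ℤ) : ℝ)] ∈ P
        rw [Int.cast_neg, neg_neg]
        exact this)
      (fun m k c h x y hxy => by
        have := hhalf m (-k) c (fun p hp => by have := h p hp; push_cast at this; linarith) _ hxy
        simpa using this)
      hamin hbmax ⟨pa, hpa, rfl⟩ ⟨pb, hpb, rfl⟩
      (fun x hx => by rw [neg_neg]; exact (hcol _ _).mpr ⟨hx, le_rfl, hle x hx⟩)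
      (fun x y h => by have := ((hcol _ _).mp h).2.1; linarith)
  have hlt : ∀ x ∈ Ioo (a : ℝ) b, f x < g x := by
    intro x hx
    have := pos_of_concaveOn (hgH.concave.add hfH.concave)
      (fun x hx => by simpa using hle x hx) (Ioo_subset_Icc_self hz0)
      (by simpa using hz1.1.trans hz1.2) hx
    simpa using this
  rw [hA, hB]
  exact lattice_count hconv hcomp.isClosed hgH hfH hmem hle hlt hℓ
end

section
/- Let S ⊆ ℤ² be a finite set of lattice points and let P = convexHull ℝ S ⊆ ℝ² have nonempty interior (a convex lattice polygon). Then for every positive integer ℓ, the number of points of ℤ² lying in the topological frontier of the dilated polygon ℓ•P := {ℓ·x : x ∈ P} equals ℓ·B, where B is the number of points of ℤ² in the frontier of P. -/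
/-!
The boundary of a convex lattice polygon, traversed counterclockwise, is cut by its lattice points
into half-open segments `[p, p + d)`, where `d` is the primitive direction of the boundary edge
leaving `p`.  Dilating by `ℓ` turns each of them into a half-open segment carrying exactly the `ℓ`
lattice points `ℓ p + k d`, `0 ≤ k < ℓ`, which proves the claim.

To make this precise without ordering the vertices, `IsEdgeDir T p d` states in terms of integers
that `p` lies on an edge of `convexHull ℝ T` with primitive direction `d`, that the polygon is to
the left of it, and that `p` is not the final endpoint of this edge.  A lattice point lies on the
frontier iff it has such a direction (`mem_frontier_iff`), and the direction is then unique
(`IsEdgeDir.unique`), so boundary lattice points can be counted as pairs `(p, d)`.  On such pairs,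
`((p, d), k) ↦ (ℓ p + k d, d)` is a bijection from the pairs of `P` times `{0, …, ℓ - 1}` onto the
pairs of `ℓ P`; this is elementary divisibility (`isEdgeDir_dilate_iff`).
-/

open MeasureTheory Set Pointwise

/-! ### Directions of boundary edges -/

/-- The determinant of the pair of plane vectors `a`, `b`; it is nonnegative when `b` points to the
left of `a`. -/
def cross {R : Type*} [CommRing R] (a b : Fin 2 → R) : R := a 0 * b 1 - a 1 * b 0

/-- `p` lies on an edge of the convex hull of `T` with primitive direction vector `d`, has the
hull on the left of that edge, and is not the final endpoint of the edge. -/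
def IsEdgeDir (T : Finset (Fin 2 → ℤ)) (p d : Fin 2 → ℤ) : Prop :=
  IsCoprime (d 0) (d 1) ∧ (∃ s ∈ T, ∃ i : ℤ, 0 ≤ i ∧ p = s + i • d) ∧
    (∃ s ∈ T, ∃ j : ℤ, 0 < j ∧ s = p + j • d) ∧ ∀ t ∈ T, 0 ≤ cross d (t - p)

/-- The real convex hull of a finite set of lattice points. -/
noncomputable def hull (T : Finset (Fin 2 → ℤ)) : Set (Fin 2 → ℝ) :=
  convexHull ℝ (latticeMap '' (T : Set (Fin 2 → ℤ)))

/-! ### Plane vectors and half-planes -/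

lemma exists_eq_smul_of_cross_eq_zero {d w : Fin 2 → ℤ} (hd : IsCoprime (d 0) (d 1))
    (h : cross d w = 0) : ∃ m : ℤ, w = m • d := by
  obtain ⟨a, b, hab⟩ := hd
  unfold cross at h
  refine ⟨a * w 0 + b * w 1, ?_⟩
  ext i
  fin_cases i
  · simp only [Fin.zero_eta, Pi.smul_apply, smul_eq_mul]
    linear_combination -w 0 * hab - b * h
  · simp only [Fin.mk_one, Pi.smul_apply, smul_eq_mul]
    linear_combination -w 1 * hab + a * h

lemma sq_add_sq_pos_of_isCoprime {d : Fin 2 → ℤ} (hd : IsCoprime (d 0) (d 1)) :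
    0 < d 0 ^ 2 + d 1 ^ 2 := by
  rcases hd.ne_zero_or_ne_zero with h | h <;> positivity

lemma eq_zero_of_sq_add_sq_nonpos {e : Fin 2 → ℝ} (h : e 0 ^ 2 + e 1 ^ 2 ≤ 0) : e = 0 := by
  have h0 : e 0 = 0 := by nlinarith [sq_nonneg (e 0), sq_nonneg (e 1)]
  have h1 : e 1 = 0 := by nlinarith [sq_nonneg (e 0), sq_nonneg (e 1)]
  ext i
  fin_cases i
  · exact h0
  · exact h1

lemma cross_latticeMap (d t p : Fin 2 → ℤ) :
    cross (latticeMap d) (latticeMap t - latticeMap p) = (cross d (t - p) : ℤ) := by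
  simp [cross, latticeMap]

/-- A weak linear inequality valid on the lattice points is valid on their hull. -/
lemma hull_halfplane {T : Finset (Fin 2 → ℤ)} {a b c : ℝ}
    (h : ∀ t ∈ T, c ≤ a * t 0 + b * t 1) {x : Fin 2 → ℝ} (hx : x ∈ hull T) :
    c ≤ a * x 0 + b * x 1 := by
  have hlin : IsLinearMap ℝ fun x : Fin 2 → ℝ => a * x 0 + b * x 1 :=
    ⟨fun x y => by simp only [Pi.add_apply]; ring,
      fun r x => by simp only [Pi.smul_apply, smul_eq_mul]; ring⟩
  refine convexHull_min ?_ (convex_halfSpace_ge hlin c) hx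
  rintro _ ⟨t, ht, rfl⟩
  exact h t ht

lemma hull_cross_nonneg {T : Finset (Fin 2 → ℤ)} {e y : Fin 2 → ℝ}
    (h : ∀ t ∈ T, 0 ≤ cross e (latticeMap t - y)) {x : Fin 2 → ℝ} (hx : x ∈ hull T) :
    0 ≤ cross e (x - y) := by
  have := hull_halfplane (a := -e 1) (b := e 0) (c := e 0 * y 1 - e 1 * y 0) (T := T) ?_ hx
  · simp only [cross, Pi.sub_apply]; linarith
  · intro t ht
    have := h t ht
    simp only [cross, Pi.sub_apply, latticeMap] at this
    linarith

/-- A set with `x` in its interior is in no closed half-plane whose boundary line contains `x`. -/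
lemma eq_zero_of_mem_interior {K : Set (Fin 2 → ℝ)} {x e : Fin 2 → ℝ} (hx : x ∈ interior K)
    (h : ∀ y ∈ K, 0 ≤ cross e (y - x)) : e = 0 := by
  -- Move from `x` to the right of `e`, staying inside `K`.
  have hc : Continuous fun t : ℝ => x + t • (![e 1, -e 0] : Fin 2 → ℝ) := by fun_prop
  have h0 : ∀ᶠ t in nhds (0 : ℝ), x + t • (![e 1, -e 0] : Fin 2 → ℝ) ∈ K :=
    hc.continuousAt.eventually_mem (by simpa using mem_interior_iff_mem_nhds.1 hx)
  have h1 : ∀ᶠ t in nhdsWithin (0 : ℝ) (Ioi 0), x + t • (![e 1, -e 0] : Fin 2 → ℝ) ∈ K :=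
    h0.filter_mono nhdsWithin_le_nhds
  obtain ⟨t, htK, ht⟩ := (h1.and self_mem_nhdsWithin).exists
  have ht : 0 < t := ht
  have := h _ htK
  simp only [cross, add_sub_cancel_left, Pi.smul_apply, smul_eq_mul, Matrix.cons_val_zero,
    Matrix.cons_val_one] at this
  have h2 : t * (e 0 ^ 2 + e 1 ^ 2) ≤ 0 := by linarith
  have h3 : e 0 ^ 2 + e 1 ^ 2 ≤ 0 := nonpos_of_mul_nonpos_right h2 ht
  exact eq_zero_of_sq_add_sq_nonpos h3

/-- A hull with nonempty interior is not contained in a line. -/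
lemma eq_zero_of_cross_eq_zero {T : Finset (Fin 2 → ℤ)} (hne : (interior (hull T)).Nonempty)
    {e y : Fin 2 → ℝ} (h : ∀ t ∈ T, cross e (latticeMap t - y) = 0) : e = 0 := by
  obtain ⟨x, hx⟩ := hne
  have hz : ∀ z ∈ hull T, cross e (z - y) = 0 := by
    intro z hz
    have h1 := hull_cross_nonneg (fun t ht => (h t ht).ge) hz
    have h2 := hull_cross_nonneg (e := -e) (y := y) (T := T) (fun t ht => by
      have := h t ht
      simp only [cross, Pi.neg_apply] at this ⊢
      linarith) hz
    simp only [cross, Pi.neg_apply] at h1 h2 ⊢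
    linarith
  refine eq_zero_of_mem_interior hx fun z hzK => ?_
  have h1 := hz z hzK
  have h2 := hz x (interior_subset hx)
  simp only [cross, Pi.sub_apply] at h1 h2 ⊢
  linarith

/-! ### Edge directions characterize boundary lattice points -/

lemma IsEdgeDir.unique {T : Finset (Fin 2 → ℤ)} (hne : (interior (hull T)).Nonempty)
    {p d d' : Fin 2 → ℤ} (h : IsEdgeDir T p d) (h' : IsEdgeDir T p d') : d = d' := by
  obtain ⟨hd, -, ⟨s, hs, j, hj, rfl⟩, hT⟩ := h
  obtain ⟨hd', -, ⟨s', hs', j', hj', rfl⟩, hT'⟩ := h'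
  have h1 := hT _ hs'
  have h2 := hT' _ hs
  simp only [cross, add_sub_cancel_left, Pi.smul_apply, smul_eq_mul] at h1 h2
  have h3 : 0 ≤ d 0 * d' 1 - d 1 * d' 0 := nonneg_of_mul_nonneg_right (by linarith) hj'
  have h4 : 0 ≤ d' 0 * d 1 - d' 1 * d 0 := nonneg_of_mul_nonneg_right (by linarith) hj
  obtain ⟨m, rfl⟩ := exists_eq_smul_of_cross_eq_zero hd (w := d') (by unfold cross; linarith)
  -- `m • d` is primitive, so `m` is a unit.
  have hm : IsUnit m := by
    simp only [Pi.smul_apply, smul_eq_mul] at hd'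
    exact hd'.isUnit_of_dvd' (Dvd.intro _ rfl) (Dvd.intro _ rfl)
  rcases Int.isUnit_iff.1 hm with rfl | rfl
  · simp
  -- Opposite directions at `p` would confine the hull to a line.
  exfalso
  have h0 : latticeMap d = 0 := by
    refine eq_zero_of_cross_eq_zero hne (y := latticeMap p) fun t ht => ?_
    have h5 := hT t ht
    have h6 := hT' t ht
    rw [cross_latticeMap]
    simp only [cross, Pi.smul_apply, smul_eq_mul] at h5 h6 ⊢
    exact_mod_cast (by linarith : d 0 * (t - p) 1 - d 1 * (t - p) 0 = 0)
  have h7 := sq_add_sq_pos_of_isCoprime hd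
  have h8 : d 0 = 0 := by simpa [latticeMap] using congrFun h0 0
  have h9 : d 1 = 0 := by simpa [latticeMap] using congrFun h0 1
  simp [h8, h9] at h7

lemma IsEdgeDir.mem_frontier {T : Finset (Fin 2 → ℤ)} {p d : Fin 2 → ℤ} (h : IsEdgeDir T p d) :
    latticeMap p ∈ frontier (hull T) := by
  obtain ⟨hd, ⟨s, hs, i, hi, hp⟩, ⟨s', hs', j, hj, hp'⟩, hT⟩ := h
  refine ⟨subset_closure ?_, fun hint => ?_⟩
  · -- `p` divides the segment from `s` to `s'` in the ratio `i : j`.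
    have hij : (0 : ℝ) < i + j := by exact_mod_cast (by linarith : 0 < i + j)
    have hi' : (0 : ℝ) ≤ i := by exact_mod_cast hi
    have hj' : (0 : ℝ) < j := by exact_mod_cast hj
    have hm : ∀ t ∈ T, latticeMap t ∈ hull T := fun t ht =>
      subset_convexHull ℝ _ ⟨t, ht, rfl⟩
    have := convex_convexHull ℝ (latticeMap '' (T : Set (Fin 2 → ℤ))) (hm s hs) (hm s' hs')
      (a := j / (i + j)) (b := i / (i + j)) (by positivity) (by positivity)
      (by field_simp; ring)
    have heq : latticeMap p = ((j : ℝ) / (i + j)) • latticeMap s +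
        ((i : ℝ) / (i + j)) • latticeMap s' := ?_
    · rw [heq]
      exact this
    ext k
    have e1 : (s' k : ℝ) = p k + j * d k := by rw [hp']; simp
    have e2 : (p k : ℝ) = s k + i * d k := by rw [hp]; simp
    simp only [latticeMap, Pi.add_apply, Pi.smul_apply, smul_eq_mul, e1]
    field_simp
    rw [e2]
    ring
  · have h0 : latticeMap d = 0 := by
      refine eq_zero_of_mem_interior hint fun y hy => hull_cross_nonneg (fun t ht => ?_) hy
      rw [cross_latticeMap]
      exact_mod_cast hT t ht
    have h7 := sq_add_sq_pos_of_isCoprime hd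
    have h8 : d 0 = 0 := by simpa [latticeMap] using congrFun h0 0
    have h9 : d 1 = 0 := by simpa [latticeMap] using congrFun h0 1
    simp [h8, h9] at h7

/-- A supporting line at a frontier point, directed so that the hull is on its left. -/
lemma exists_supporting {T : Finset (Fin 2 → ℤ)} (hne : (interior (hull T)).Nonempty)
    {p : Fin 2 → ℤ} (hp : latticeMap p ∈ frontier (hull T)) :
    ∃ e : Fin 2 → ℝ, e ≠ 0 ∧ ∀ t ∈ T, 0 ≤ cross e (latticeMap t - latticeMap p) := by
  have hconv : Convex ℝ (hull T) := convex_convexHull ℝ _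
  obtain ⟨f, hf⟩ := geometric_hahn_banach_open_point hconv.interior isOpen_interior hp.2
  have hcoord : ∀ x, f x = x 0 * f (Pi.single 0 1) + x 1 * f (Pi.single 1 1) := by
    intro x
    conv_lhs => rw [pi_eq_sum_univ' x]
    simp [Fin.sum_univ_two]
  have hle : ∀ x ∈ hull T, f x ≤ f (latticeMap p) := by
    intro x hx
    have hx' : x ∈ closure (interior (hull T)) := by
      rw [hconv.closure_interior_eq_closure_of_nonempty_interior hne]
      exact subset_closure hx
    exact closure_minimal (fun y hy => (hf y hy).le)
      (isClosed_le f.continuous continuous_const) hx'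
  refine ⟨![-f (Pi.single 1 1), f (Pi.single 0 1)], fun h0 => ?_, fun t ht => ?_⟩
  · obtain ⟨x, hx⟩ := hne
    have h1 := hf x hx
    have h2 : f (Pi.single 1 1) = 0 := by simpa using congrFun h0 0
    have h3 : f (Pi.single 0 1) = 0 := by simpa using congrFun h0 1
    rw [hcoord x, hcoord (latticeMap p), h2, h3] at h1
    simp at h1
  · have h1 := hle (latticeMap t) (subset_convexHull ℝ _ ⟨t, ht, rfl⟩)
    rw [hcoord (latticeMap t), hcoord (latticeMap p)] at h1
    simp only [cross, Matrix.cons_val_zero, Matrix.cons_val_one, Pi.sub_apply]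
    linarith

/-- Rotate a supporting line at `p` counterclockwise until its forward ray meets another point `s` of
`T`; then `T` is still to the left of the line from `p` to `s`. -/
lemma exists_extreme {T : Finset (Fin 2 → ℤ)} (hne : (interior (hull T)).Nonempty)
    {p : Fin 2 → ℤ} (hp : latticeMap p ∈ frontier (hull T)) :
    ∃ s ∈ T, s ≠ p ∧ ∀ t ∈ T, 0 ≤ cross (s - p) (t - p) := by
  obtain ⟨e, he, hT⟩ := exists_supporting hne hp
  have hee : 0 < e 0 ^ 2 + e 1 ^ 2 := by
    by_contra! hcon
    exact he (eq_zero_of_sq_add_sq_nonpos hcon)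
  -- `c` and `g` are the coordinates of `t - p` orthogonal to and along `e`.
  obtain ⟨c, hc⟩ : ∃ c : (Fin 2 → ℤ) → ℝ,
    ∀ t, c t = cross e (latticeMap t - latticeMap p) := ⟨_, fun _ => rfl⟩
  obtain ⟨g, hg⟩ : ∃ g : (Fin 2 → ℤ) → ℝ,
    ∀ t, g t = e 0 * (t 0 - p 0) + e 1 * (t 1 - p 1) := ⟨_, fun _ => rfl⟩
  have hT' : ∀ t ∈ T, 0 ≤ c t := fun t ht => hc t ▸ hT t ht
  have key : ∀ s t, (e 0 ^ 2 + e 1 ^ 2) * ((cross (s - p) (t - p) : ℤ) : ℝ)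
      = g s * c t - c s * g t := by
    intro s t
    simp only [hc, hg, cross, latticeMap, Pi.sub_apply]
    push_cast
    ring
  have reduce : ∀ s t, 0 ≤ g s * c t - c s * g t → 0 ≤ cross (s - p) (t - p) := by
    intro s t h
    rw [← key] at h
    exact_mod_cast nonneg_of_mul_nonneg_right h hee
  have hcp : c p = 0 := by simp [hc, cross]
  have hgp : g p = 0 := by simp [hg]
  by_cases hA : ∃ s ∈ T, c s = 0 ∧ 0 < g s
  · obtain ⟨s, hs, hcs, hgs⟩ := hA
    refine ⟨s, hs, ?_, fun t ht => reduce s t ?_⟩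
    · rintro rfl
      exact hgs.ne' hgp
    · rw [hcs, zero_mul, sub_zero]
      exact mul_nonneg hgs.le (hT' t ht)
  · push Not at hA
    have hnonempty : (T.filter fun t => 0 < c t).Nonempty := by
      by_contra hcon
      rw [Finset.not_nonempty_iff_eq_empty, Finset.filter_eq_empty_iff] at hcon
      refine he (eq_zero_of_cross_eq_zero hne (y := latticeMap p) fun t ht => ?_)
      rw [← hc]
      exact le_antisymm (not_lt.1 (hcon ht)) (hT' t ht)
    -- Maximizing the cotangent of the angle with `e` minimizes that angle.
    obtain ⟨s, hs, hmax⟩ := Finset.exists_max_image _ (fun t => g t / c t) hnonempty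
    rw [Finset.mem_filter] at hs
    refine ⟨s, hs.1, ?_, fun t ht => reduce s t ?_⟩
    · rintro rfl
      exact hs.2.ne' hcp
    · rcases (hT' t ht).eq_or_lt with h0 | hpos
      · have := hA t ht h0.symm
        rw [← h0]
        nlinarith [hs.2]
      · have := hmax t (Finset.mem_filter.2 ⟨ht, hpos⟩)
        rw [div_le_div_iff₀ hpos hs.2] at this
        linarith

lemma exists_isEdgeDir {T : Finset (Fin 2 → ℤ)} (hne : (interior (hull T)).Nonempty)
    {p : Fin 2 → ℤ} (hp : latticeMap p ∈ frontier (hull T)) : ∃ d, IsEdgeDir T p d := by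
  obtain ⟨s, hs, hsp, hT⟩ := exists_extreme hne hp
  obtain ⟨j, d, hj, hd, hjd⟩ : ∃ j : ℤ, ∃ d : Fin 2 → ℤ, 0 < j ∧ IsCoprime (d 0) (d 1) ∧
      s - p = j • d := by
    have hpos : 0 < Int.gcd ((s - p) 0) ((s - p) 1) := by
      rw [Int.gcd_pos_iff]
      by_contra! hcon
      apply hsp
      rw [← sub_eq_zero]
      ext i
      fin_cases i
      · exact hcon.1
      · exact hcon.2
    obtain ⟨a, b, hab, h0, h1⟩ := Int.exists_gcd_one hpos
    refine ⟨_, ![a, b], Int.natCast_pos.2 hpos, by simpa [Int.isCoprime_iff_gcd_eq_one] using hab,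
      ?_⟩
    ext i
    fin_cases i
    · simpa [mul_comm] using h0
    · simpa [mul_comm] using h1
  have hTd : ∀ t ∈ T, 0 ≤ cross d (t - p) := by
    intro t ht
    have := hT t ht
    rw [hjd] at this
    simp only [cross, Pi.smul_apply, smul_eq_mul] at this ⊢
    exact nonneg_of_mul_nonneg_right (by linarith) hj
  refine ⟨d, hd, ?_, ⟨s, hs, j, hj, by rw [← hjd]; abel⟩, hTd⟩
  -- Since `p` is in the hull, the points of `T` on the edge cannot all lie strictly beyond `p`.
  obtain ⟨t, ht, hct, hgt⟩ : ∃ t ∈ T, cross d (t - p) = 0 ∧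
      d 0 * (t 0 - p 0) + d 1 * (t 1 - p 1) ≤ 0 := by
    by_contra! hcon
    obtain ⟨N, hN0, hN⟩ : ∃ N : ℤ, 0 ≤ N ∧ ∀ t ∈ T, 1 - (d 0 * (t 0 - p 0) + d 1 * (t 1 - p 1)) ≤ N := by
      obtain ⟨N, hN⟩ :=
        (T.image fun t => 1 - (d 0 * (t 0 - p 0) + d 1 * (t 1 - p 1))).bddAbove
      exact ⟨|N|, abs_nonneg N, fun t ht =>
        (hN (Finset.mem_coe.2 (Finset.mem_image.2 ⟨t, ht, rfl⟩))).trans (le_abs_self N)⟩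
    -- Tilting the edge line slightly about `p` would separate `p` strictly from `T`.
    have hall : ∀ t ∈ T, 1 ≤ N * cross d (t - p) +
        (d 0 * (t 0 - p 0) + d 1 * (t 1 - p 1)) := by
      intro t ht
      have h1 := hN t ht
      rcases (hTd t ht).eq_or_lt with h0 | hpos
      · have := hcon t ht h0.symm
        rw [← h0]
        linarith
      · have : N * 1 ≤ N * cross d (t - p) :=
          mul_le_mul_of_nonneg_left hpos hN0
        linarith
    have hpK : latticeMap p ∈ hull T := by
      have hclosed : IsClosed (hull T) :=
        ((T.finite_toSet.image latticeMap).isCompact_convexHull (𝕜 := ℝ)).isClosed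
      exact hclosed.frontier_subset hp
    have := hull_halfplane (T := T) (a := -N * d 1 + d 0) (b := N * d 0 + d 1)
      (c := 1 + ((-N * d 1 + d 0) * p 0 + (N * d 0 + d 1) * p 1)) (fun t ht => by
        have h1 := hall t ht
        have h2 : (1 : ℝ) ≤ ((N * cross d (t - p) +
          (d 0 * (t 0 - p 0) + d 1 * (t 1 - p 1)) : ℤ) : ℝ) := by exact_mod_cast h1
        simp only [cross, Pi.sub_apply] at h2
        push_cast at h2
        linarith) hpK
    simp only [latticeMap] at this
    linarith
  obtain ⟨m, hm⟩ := exists_eq_smul_of_cross_eq_zero hd hct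
  refine ⟨t, ht, -m, ?_, ?_⟩
  · have h0 : t 0 - p 0 = m * d 0 := by simpa using congrFun hm 0
    have h1 : t 1 - p 1 = m * d 1 := by simpa using congrFun hm 1
    rw [h0, h1] at hgt
    nlinarith [sq_add_sq_pos_of_isCoprime hd]
  · rw [neg_smul, ← hm]
    abel

lemma mem_frontier_iff {T : Finset (Fin 2 → ℤ)} (hne : (interior (hull T)).Nonempty)
    {p : Fin 2 → ℤ} : latticeMap p ∈ frontier (hull T) ↔ ∃ d, IsEdgeDir T p d :=
  ⟨exists_isEdgeDir hne, fun ⟨_, h⟩ => h.mem_frontier⟩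

/-! ### Counting under dilation -/

/-- The set of boundary lattice points, each with the direction of the edge leaving it. -/
def edgePairs (T : Finset (Fin 2 → ℤ)) : Set ((Fin 2 → ℤ) × (Fin 2 → ℤ)) :=
  {x | IsEdgeDir T x.1 x.2}

lemma ncard_frontier {T : Finset (Fin 2 → ℤ)} (hne : (interior (hull T)).Nonempty) :
    {n : Fin 2 → ℤ | latticeMap n ∈ frontier (hull T)}.ncard = (edgePairs T).ncard := by
  have h : {n : Fin 2 → ℤ | latticeMap n ∈ frontier (hull T)} = Prod.fst '' edgePairs T := by
    ext n
    simp [edgePairs, mem_frontier_iff hne]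
  rw [h, InjOn.ncard_image]
  rintro ⟨p, d⟩ hx ⟨p', d'⟩ hy (rfl : p = p')
  have hd : d = d' := IsEdgeDir.unique hne hx hy
  rw [hd]

/-- The boundary lattice points of the dilated polygon on a given edge arise by subdividing the unit
lattice segments of that edge of the original polygon into `ℓ` parts. -/
lemma isEdgeDir_dilate_iff (S : Finset (Fin 2 → ℤ)) {ℓ : ℤ} (hℓ : 0 < ℓ) (q d : Fin 2 → ℤ) :
    IsEdgeDir (S.image (ℓ • ·)) q d ↔
      ∃ p, ∃ k : ℤ, 0 ≤ k ∧ k < ℓ ∧ IsEdgeDir S p d ∧ q = ℓ • p + k • d := by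
  constructor
  · rintro ⟨hd, ⟨_, hs₀, i, hi, hq⟩, ⟨_, hs₁, j, hj, hq'⟩, hT⟩
    obtain ⟨s, hs, rfl⟩ := Finset.mem_image.1 hs₀
    obtain ⟨s', hs', rfl⟩ := Finset.mem_image.1 hs₁
    -- `s` and `s'` are lattice points on one edge of the undilated polygon, parallel to `d`.
    obtain ⟨b, hb⟩ : ∃ b : ℤ, s' - s = b • d := by
      refine exists_eq_smul_of_cross_eq_zero hd (mul_left_cancel₀ hℓ.ne' ?_)
      have e0 := congrFun hq' 0
      have e1 := congrFun hq' 1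
      simp only [hq, Pi.add_apply, Pi.smul_apply, smul_eq_mul] at e0 e1
      simp only [cross, Pi.sub_apply]
      linear_combination d 0 * e1 - d 1 * e0
    have hlb : ℓ * b = i + j := by
      have h1 : (ℓ * b) • d = (i + j) • d := by
        rw [mul_smul, ← hb, smul_sub, add_smul]
        rw [hq', hq]
        abel
      have h2 := sq_add_sq_pos_of_isCoprime hd
      by_contra hne
      have h0 : ∀ k, d k = 0 := fun k => by
        by_contra hk
        exact hne (mul_right_cancel₀ hk (by simpa using congrFun h1 k))
      simp [h0] at h2
    have hdiv := Int.mul_ediv_add_emod i ℓ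
    have hmod := Int.emod_nonneg i hℓ.ne'
    have hq2 : q = ℓ • (s + (i / ℓ) • d) + (i % ℓ) • d := by
      rw [hq, smul_add, smul_smul, add_assoc, ← add_smul, hdiv]
    refine ⟨s + (i / ℓ) • d, i % ℓ, hmod, Int.emod_lt_of_pos i hℓ,
      ⟨hd, ⟨s, hs, i / ℓ, Int.ediv_nonneg hi hℓ.le, rfl⟩, ⟨s', hs', b - i / ℓ, ?_, ?_⟩, ?_⟩, hq2⟩
    · have : ℓ * (i / ℓ) < ℓ * b := by linarith
      linarith [lt_of_mul_lt_mul_left this hℓ.le]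
    · rw [sub_smul, ← hb]
      abel
    · intro t ht
      have h1 := hT _ (Finset.mem_image_of_mem _ ht)
      refine nonneg_of_mul_nonneg_right (a := ℓ) ?_ hℓ
      refine h1.trans_eq ?_
      rw [hq2]
      simp only [cross, Pi.sub_apply, Pi.add_apply, Pi.smul_apply, smul_eq_mul]
      ring
  · rintro ⟨p, k, hk, hkℓ, ⟨hd, ⟨s, hs, i, hi, hp⟩, ⟨s', hs', j, hj, hp'⟩, hT⟩, rfl⟩
    refine ⟨hd, ⟨ℓ • s, Finset.mem_image_of_mem _ hs, ℓ * i + k, by positivity, ?_⟩,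
      ⟨ℓ • s', Finset.mem_image_of_mem _ hs', ℓ * j - k, by nlinarith, ?_⟩, ?_⟩
    · rw [hp, smul_add, add_smul, mul_smul, add_assoc]
    · rw [hp', smul_add, sub_smul, mul_smul]
      abel
    · intro t' ht'
      obtain ⟨t, ht, rfl⟩ := Finset.mem_image.1 ht'
      have h1 := mul_nonneg hℓ.le (hT t ht)
      refine h1.trans_eq ?_
      simp only [cross, Pi.sub_apply, Pi.add_apply, Pi.smul_apply, smul_eq_mul]
      ring

lemma ncard_edgePairs_dilate (S : Finset (Fin 2 → ℤ)) {ℓ : ℕ} (hℓ : 0 < ℓ) :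
    (edgePairs (S.image ((ℓ : ℤ) • ·))).ncard = ℓ * (edgePairs S).ncard := by
  have hℓ' : (0 : ℤ) < ℓ := by exact_mod_cast hℓ
  have h : edgePairs (S.image ((ℓ : ℤ) • ·)) =
      (fun x : ℤ × ((Fin 2 → ℤ) × (Fin 2 → ℤ)) => ((ℓ : ℤ) • x.2.1 + x.1 • x.2.2, x.2.2)) ''
        (Ico (0 : ℤ) ℓ ×ˢ edgePairs S) := by
    ext ⟨q, d⟩
    simp only [edgePairs, mem_ofPred_eq, isEdgeDir_dilate_iff S hℓ', mem_image, mem_prod, mem_Ico,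
      Prod.mk.injEq]
    constructor
    · rintro ⟨p, k, hk, hk', h, rfl⟩
      exact ⟨(k, p, d), ⟨⟨hk, hk'⟩, h⟩, rfl, rfl⟩
    · rintro ⟨⟨k, p, d⟩, ⟨⟨hk, hk'⟩, h⟩, rfl, rfl⟩
      exact ⟨p, k, hk, hk', h, rfl⟩
  rw [h, InjOn.ncard_image, ncard_prod]
  · congr 1
    rw [← Finset.coe_Ico, ncard_coe_finset]
    simp
  · rintro ⟨k, p, d⟩ ⟨⟨hk, hkℓ⟩, hx⟩ ⟨k', p', d'⟩ ⟨⟨hk', hkℓ'⟩, -⟩ heq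
    simp only [Prod.mk.injEq] at heq hk hkℓ hk' hkℓ'
    obtain ⟨heq, rfl⟩ := heq
    -- `d` is primitive, so `k` is determined modulo `ℓ`.
    obtain ⟨a, b, hab⟩ := hx.1
    simp only at hab
    have e : ∀ i, (ℓ : ℤ) * p i + k * d i = ℓ * p' i + k' * d i := fun i => by
      simpa using congrFun heq i
    have hdvd : k' - k = ℓ * (a * (p 0 - p' 0) + b * (p 1 - p' 1)) := by
      linear_combination (k - k') * hab - a * e 0 - b * e 1
    have hkk : k = k' := by
      have h0 : k' - k = 0 := Int.eq_zero_of_abs_lt_dvd (Dvd.intro _ hdvd.symm)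
        (abs_lt.2 ⟨by linarith, by linarith⟩)
      linarith
    subst hkk
    have hpp : p = p' := by
      ext i
      exact mul_left_cancel₀ hℓ'.ne' (by linarith [e i])
    rw [hpp]

lemma smul_hull (S : Finset (Fin 2 → ℤ)) (ℓ : ℕ) :
    (ℓ : ℝ) • hull S = hull (S.image ((ℓ : ℤ) • ·)) := by
  unfold hull
  rw [← convexHull_smul, Finset.coe_image, image_image, ← image_smul, image_image]
  congr 2
  ext n i
  simp [latticeMap]

/-- **Ehrhart polynomial of the boundary of a lattice polygon**: for a convex lattice
polygon `P = convexHull ℝ S` with nonempty interior and any positive integer `ℓ`, the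
number of lattice points in the frontier of the dilated polygon `ℓ•P` equals `ℓ·B`,
where `B` is the number of lattice points in the frontier of `P`. -/
theorem ehrhart_boundary_polygon (S : Finset (Fin 2 → ℤ)) (P : Set (Fin 2 → ℝ))
    (hP : P = convexHull ℝ (latticeMap '' (S : Set (Fin 2 → ℤ))))
    (hne : (interior P).Nonempty)
    (B : ℕ)
    (hB : B = {n : Fin 2 → ℤ | latticeMap n ∈ frontier P}.ncard) :
    ∀ ℓ : ℕ, 0 < ℓ →
      {n : Fin 2 → ℤ | latticeMap n ∈ frontier ((ℓ : ℝ) • P)}.ncard = ℓ * B := by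
  intro ℓ hℓ
  change P = hull S at hP
  subst hP
  have hne' : (interior (hull (S.image ((ℓ : ℤ) • ·)))).Nonempty := by
    rw [← smul_hull, interior_smul₀ (by positivity)]
    exact hne.smul_set
  rw [hB, smul_hull, ncard_frontier hne, ncard_frontier hne', ncard_edgePairs_dilate S hℓ]
end
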